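/- The set D̂ of positive integers n that are simultaneously pseudo-square-free, (2, log log n)-free, and (log log n)-separable has natural density 1. In particular, if D₁ and D₂ are two sets of positive integers each of natural density 1, then D₁ ∩ D₂ has natural density 1. -/

import Mathlib

/-- A set `D` of positive integers has natural density `1` if
`|D ∩ {1,…,N}| / N → 1` as `N → ∞`. -/
def HasDensityOne (D : Set ℕ) : Prop :=
  Filter.Tendsto (fun N : ℕ =>
    (Nat.card {n : ℕ | n ∈ Finset.Icc 1 N ∧ n ∈ D} : ℝ) / N)
    Filter.atTop (nhds 1)

/-- A positive integer `n` is *pseudo-square-free* if for every prime `p` dividing `n`: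
if `p > log log n` then `p² ∤ n`, and if `p ≤ log log n` then `p ^ (v_p n) ≤ log n`. -/
def PseudoSquareFree (n : ℕ) : Prop :=
  ∀ p : ℕ, p.Prime → p ∣ n →
    (Real.log (Real.log n) < (p : ℝ) → ¬ (p ^ 2 ∣ n)) ∧
    ((p : ℝ) ≤ Real.log (Real.log n) → (p : ℝ) ^ (n.factorization p) ≤ Real.log n)

/-- A positive integer `n` is `(2,c)`-free if every prime `p` with `p² ∣ n` satisfies `p ≤ c`. -/
def TwoCFree (c : ℝ) (n : ℕ) : Prop :=
  ∀ p : ℕ, p.Prime → p ^ 2 ∣ n → (p : ℝ) ≤ c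

/-- A positive integer `n` is `c`-separable if for every prime `p > c` dividing `n`,
every prime `q`, and every `k ≥ 0`: `q ^ k ∣ n` and `q ^ k ≡ 1 (mod p)` imply `k = 0`. -/
def CSeparable (c : ℝ) (n : ℕ) : Prop :=
  ∀ p : ℕ, p.Prime → c < (p : ℝ) → p ∣ n →
    ∀ q : ℕ, q.Prime → ∀ k : ℕ, q ^ k ∣ n → q ^ k ≡ 1 [MOD p] → k = 0

/-!
If `n` is divisible neither by a square `r ^ 2` with `r ^ 3 > log log n` nor by a product `p * q` of
primes with `p > log log n` and `q ≡ 1 (mod p)`, then `n` is pseudo-square-free,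
`(2, log log n)`-free and `(log log n)`-separable. So it suffices that few `n ≤ N` are divisible by
such an `r ^ 2` or `p * q`, and here `log log n` may be replaced by `c = log log N / 2`, since
`n ≤ √N` can be ignored. There are `O (N / c ^ (1 / 3))` multiples of the squares. By the
Brun–Titchmarsh inequality, the sum of `1 / q` over the primes `q ≡ 1 (mod p)` with `p < q ≤ N` is
`O (log log N / p)`, while the sum of `1 / p ^ 2` over the primes `p > c` is `O (1 / (c * log c))`
by Chebyshev's estimate; hence there are `O (N / log c)` multiples of the products `p * q`.
-/

open Finset

section SelbergSieve

open ArithmeticFunction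

theorem sum_moebius_divisors_filter_dvd {m : ℕ} (hm : Squarefree m) (l : ℕ) :
    ∑ d ∈ m.divisors with l ∣ d, moebius d = if l = m then moebius m else 0 := by
  by_cases hlm : l ∣ m
  · obtain ⟨t, rfl⟩ := hlm
    have hl : 0 < l := Nat.pos_of_ne_zero (left_ne_zero_of_mul hm.ne_zero)
    have ht : t ≠ 0 := right_ne_zero_of_mul hm.ne_zero
    have hfilter : {d ∈ (l * t).divisors | l ∣ d} = t.divisors.image (l * ·) := by
      ext d
      simp only [mem_filter, Nat.mem_divisors, mem_image]
      constructor
      · rintro ⟨⟨hd, -⟩, e, rfl⟩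
        exact ⟨e, ⟨Nat.dvd_of_mul_dvd_mul_left hl hd, ht⟩, rfl⟩
      · rintro ⟨e, ⟨he, -⟩, rfl⟩
        exact ⟨⟨mul_dvd_mul_left l he, hm.ne_zero⟩, dvd_mul_right l e⟩
    have hmul : ∀ e ∈ t.divisors, moebius (l * e) = moebius l * moebius e := fun e he =>
      isMultiplicative_moebius.map_mul_of_coprime
        (Nat.coprime_of_squarefree_mul
          (hm.squarefree_of_dvd (mul_dvd_mul_left l (Nat.dvd_of_mem_divisors he))))
    rw [hfilter, sum_image fun a _ b _ h => Nat.eq_of_mul_eq_mul_left hl h, sum_congr rfl hmul,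
      ← mul_sum, ← coe_mul_zeta_apply, moebius_mul_coe_zeta, one_apply]
    by_cases h1 : t = 1 <;> simp [h1, hl.ne']
  · rw [if_neg (by rintro rfl; exact hlm dvd_rfl)]
    refine sum_eq_zero fun d hd => absurd ?_ hlm
    exact (mem_filter.1 hd).2.trans (Nat.dvd_of_mem_divisors (mem_filter.1 hd).1)

variable (s : BoundingSieve) (z : ℕ)

/-- The sum `∑ g(l)` of the Selberg terms over `l ∣ P`, `l ≤ z`: the saving of the Selberg sieve
of level `z ^ 2`. -/
noncomputable def selbergSum : ℝ := ∑ l ∈ s.prodPrimes.divisors with l ≤ z, s.selbergTerms l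

/-- The weights `λ_d` that minimise the main term of the `Λ²` sieve among those supported on
`d ≤ z` with `λ_1 = 1`. -/
noncomputable def selbergWeight (d : ℕ) : ℝ :=
  moebius d / (s.nu d * selbergSum s z) *
    ∑ l ∈ s.prodPrimes.divisors with l ≤ z ∧ d ∣ l, s.selbergTerms l

variable {s z}

theorem selbergSum_pos (hz : 0 < z) : 0 < selbergSum s z := by
  refine sum_pos (fun l hl => s.selbergTerms_pos (Nat.dvd_of_mem_divisors (mem_filter.1 hl).1))
    ⟨1, ?_⟩
  simpa using ⟨s.prodPrimes_ne_zero, hz⟩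

theorem selbergWeight_one (hz : 0 < z) : selbergWeight s z 1 = 1 := by
  have hS := (selbergSum_pos (s := s) hz).ne'
  simp only [selbergWeight, moebius_apply_one, s.nu_mult.map_one, one_dvd, and_true, Int.cast_one,
    one_mul, one_div]
  exact inv_mul_cancel₀ hS

theorem selbergWeight_eq_zero_of_lt {d : ℕ} (hd : z < d) : selbergWeight s z d = 0 := by
  rw [selbergWeight, filter_false_of_mem, sum_empty, mul_zero]
  rintro l hl ⟨hlz, hdl⟩
  exact (hd.trans_le (Nat.le_of_dvd (Nat.pos_of_mem_divisors hl) hdl)).not_ge hlz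

theorem inv_nu_mul_selbergTerms {d m : ℕ} (h : d * m ∣ s.prodPrimes) :
    (s.nu d)⁻¹ * s.selbergTerms (d * m) = ∑ k ∈ d.divisors, s.selbergTerms (m * k) := by
  have hd := (dvd_mul_right d m).trans h
  have hcop := Nat.coprime_of_squarefree_mul (s.squarefree_of_dvd_prodPrimes h)
  have hmul : ∀ k ∈ d.divisors, s.selbergTerms (m * k) = s.selbergTerms m * s.selbergTerms k :=
    fun k hk => s.selbergTerms_isMultiplicative.map_mul_of_coprime
      (hcop.symm.coprime_dvd_right (Nat.dvd_of_mem_divisors hk))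
  rw [sum_congr rfl hmul, ← mul_sum, ← Nat.divisors_filter_dvd_of_dvd s.prodPrimes_ne_zero hd,
    sum_filter, s.sum_divisors_selbergTerms_eq_selbergTerms_mul_nu_inv hd,
    s.selbergTerms_isMultiplicative.map_mul_of_coprime hcop]
  ring

/-- Sorting the `l ≤ z` by `gcd (l, d)` bounds the saving from below. -/
theorem sum_selbergTerms_filter_dvd_le {d : ℕ} (hd : d ∣ s.prodPrimes) :
    ∑ l ∈ s.prodPrimes.divisors with l ≤ z ∧ d ∣ l, s.selbergTerms l ≤
      s.nu d * selbergSum s z := by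
  have hd0 : 0 < d := Nat.pos_of_dvd_of_pos hd (Nat.pos_of_ne_zero s.prodPrimes_ne_zero)
  set T := {l ∈ s.prodPrimes.divisors | l ≤ z ∧ d ∣ l} with hT
  have hmem : ∀ l ∈ T, ∀ k ∈ d.divisors, ∃ m, l = d * m ∧ d.Coprime m ∧
      l / d * k ∈ {l ∈ s.prodPrimes.divisors | l ≤ z} ∧ (l / d * k).gcd d = k := by
    intro l hl k hk
    simp only [hT, mem_filter, Nat.mem_divisors] at hl hk ⊢
    obtain ⟨⟨hlP, -⟩, hlz, m, rfl⟩ := hl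
    have hcop := Nat.coprime_of_squarefree_mul (s.squarefree_of_dvd_prodPrimes hlP)
    have hdvd : m * k ∣ d * m := mul_comm d m ▸ mul_dvd_mul_left m hk.1
    have hle : m * k ≤ d * m := mul_comm d m ▸ Nat.mul_le_mul_left m (Nat.le_of_dvd hd0 hk.1)
    rw [Nat.mul_div_cancel_left m hd0, hcop.symm.gcd_mul_left_cancel, Nat.gcd_eq_left hk.1]
    exact ⟨m, rfl, hcop, ⟨⟨hdvd.trans hlP, s.prodPrimes_ne_zero⟩, hle.trans hlz⟩, rfl⟩
  have hterm : ∀ l ∈ T, (s.nu d)⁻¹ * s.selbergTerms l =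
      ∑ k ∈ d.divisors, s.selbergTerms (l / d * k) := by
    intro l hl
    obtain ⟨hlP, -, m, rfl⟩ := by simpa only [hT, mem_filter] using hl
    rw [Nat.mul_div_cancel_left m hd0, inv_nu_mul_selbergTerms (Nat.dvd_of_mem_divisors hlP)]
  have hinj : Set.InjOn (fun x : ℕ × ℕ => x.1 / d * x.2) (T ×ˢ d.divisors : Finset (ℕ × ℕ)) := by
    rintro ⟨l, k⟩ hlk ⟨l', k'⟩ hlk' heq
    rw [mem_coe, mem_product] at hlk hlk'
    obtain ⟨m, rfl, -, -, hk⟩ := hmem l hlk.1 k hlk.2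
    obtain ⟨m', rfl, -, -, hk'⟩ := hmem l' hlk'.1 k' hlk'.2
    simp only at heq hk hk'
    obtain rfl : k = k' := by rw [← hk, ← hk', heq]
    simp only [Nat.mul_div_cancel_left _ hd0] at heq
    rw [Nat.eq_of_mul_eq_mul_right (Nat.pos_of_mem_divisors hlk.2) heq]
  have hle : (s.nu d)⁻¹ * ∑ l ∈ T, s.selbergTerms l ≤ selbergSum s z := by
    rw [mul_sum, sum_congr rfl hterm,
      ← sum_product' T d.divisors fun l k => s.selbergTerms (l / d * k),
      ← sum_image (f := s.selbergTerms) hinj]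
    refine sum_le_sum_of_subset_of_nonneg (image_subset_iff.2 fun x hx => ?_) fun l hl _ =>
      (s.selbergTerms_pos (Nat.dvd_of_mem_divisors (mem_filter.1 hl).1)).le
    obtain ⟨-, -, -, h, -⟩ := hmem x.1 (mem_product.1 hx).1 x.2 (mem_product.1 hx).2
    exact h
  rwa [inv_mul_le_iff₀ (s.nu_pos_of_dvd_prodPrimes hd)] at hle

theorem abs_selbergWeight_le_one (hz : 0 < z) {d : ℕ} (hd : d ∣ s.prodPrimes) :
    |selbergWeight s z d| ≤ 1 := by
  have hpos : 0 < s.nu d * selbergSum s z :=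
    mul_pos (s.nu_pos_of_dvd_prodPrimes hd) (selbergSum_pos hz)
  have hnonneg : 0 ≤ ∑ l ∈ s.prodPrimes.divisors with l ≤ z ∧ d ∣ l, s.selbergTerms l :=
    sum_nonneg fun l hl =>
      (s.selbergTerms_pos (Nat.dvd_of_mem_divisors (mem_filter.1 hl).1)).le
  have hmoebius : |(moebius d : ℝ)| ≤ 1 := mod_cast abs_moebius_le_one
  rw [selbergWeight, abs_mul, abs_div, abs_of_pos hpos, abs_of_nonneg hnonneg, div_mul_eq_mul_div,
    div_le_one hpos]
  exact (mul_le_of_le_one_left hnonneg hmoebius).trans (sum_selbergTerms_filter_dvd_le hd)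

theorem sum_nu_mul_selbergWeight {l : ℕ} (hl : l ∣ s.prodPrimes) :
    ∑ d ∈ s.prodPrimes.divisors with l ∣ d, s.nu d * selbergWeight s z d =
      if l ≤ z then moebius l * s.selbergTerms l / selbergSum s z else 0 := by
  have hterm : ∀ d ∈ {d ∈ s.prodPrimes.divisors | l ∣ d}, s.nu d * selbergWeight s z d =
      ∑ m ∈ s.prodPrimes.divisors with m ≤ z,
        if d ∣ m then moebius d * s.selbergTerms m / selbergSum s z else 0 := by
    intro d hd
    have hnu := s.nu_ne_zero (Nat.dvd_of_mem_divisors (mem_filter.1 hd).1)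
    rw [← sum_filter, filter_filter, selbergWeight, mul_sum, mul_sum]
    refine sum_congr rfl fun m _ => ?_
    field_simp
  have hinner : ∀ m ∈ {m ∈ s.prodPrimes.divisors | m ≤ z},
      ∑ d ∈ s.prodPrimes.divisors with l ∣ d,
        (if d ∣ m then (moebius d : ℝ) * s.selbergTerms m / selbergSum s z else 0) =
      if l = m then moebius m * s.selbergTerms m / selbergSum s z else 0 := by
    intro m hm
    have hmP := Nat.dvd_of_mem_divisors (mem_filter.1 hm).1
    have hmoebius : ∑ d ∈ m.divisors with l ∣ d, (moebius d : ℝ) =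
        if l = m then (moebius m : ℝ) else 0 := by
      exact_mod_cast sum_moebius_divisors_filter_dvd (s.squarefree_of_dvd_prodPrimes hmP) l
    rw [← sum_filter, filter_comm, Nat.divisors_filter_dvd_of_dvd s.prodPrimes_ne_zero hmP,
      ← sum_div, ← sum_mul, hmoebius]
    split_ifs <;> simp
  rw [sum_congr rfl hterm, sum_comm, sum_congr rfl hinner, sum_ite_eq]
  simp [hl, s.prodPrimes_ne_zero]

theorem mainSum_selbergWeight (hz : 0 < z) :
    s.mainSum (BoundingSieve.lambdaSquared (selbergWeight s z)) = (selbergSum s z)⁻¹ := by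
  have hS := (selbergSum_pos (s := s) hz).ne'
  have hterm : ∀ l ∈ s.prodPrimes.divisors,
      (s.selbergTerms l)⁻¹ *
        (∑ d ∈ s.prodPrimes.divisors, if l ∣ d then s.nu d * selbergWeight s z d else 0) ^ 2 =
      if l ≤ z then s.selbergTerms l / selbergSum s z ^ 2 else 0 := by
    intro l hl
    have hlP := Nat.dvd_of_mem_divisors hl
    have hg := (s.selbergTerms_pos hlP).ne'
    have hmoebius : (moebius l : ℝ) ^ 2 = 1 :=
      mod_cast moebius_sq_eq_one_of_squarefree (s.squarefree_of_dvd_prodPrimes hlP)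
    rw [← sum_filter, sum_nu_mul_selbergWeight hlP]
    split_ifs
    · rw [div_pow, mul_pow, hmoebius]
      field_simp
    · simp
  rw [s.mainSum_lambdaSquared_eq_sum_mul_sum_sq, sum_congr rfl hterm, ← sum_filter, ← sum_div,
    ← selbergSum]
  field_simp

theorem sum_abs_lambdaSquared_le (w : ℕ → ℝ) {P : ℕ} (hP : P ≠ 0) :
    ∑ d ∈ P.divisors, |BoundingSieve.lambdaSquared w d| ≤ (∑ d ∈ P.divisors, |w d|) ^ 2 := by
  have hterm : ∀ d ∈ P.divisors, |BoundingSieve.lambdaSquared w d| ≤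
      ∑ x ∈ P.divisors ×ˢ P.divisors, if d = x.1.lcm x.2 then |w x.1| * |w x.2| else 0 := by
    intro d hd
    have hsub := Nat.divisors_subset_of_dvd hP (Nat.dvd_of_mem_divisors hd)
    rw [BoundingSieve.lambdaSquared, ← sum_product']
    refine le_trans (abs_sum_le_sum_abs _ _) (le_trans (sum_le_sum fun x _ => ?_)
      (sum_le_sum_of_subset_of_nonneg (product_subset_product hsub hsub) fun x _ _ => ?_))
    · rw [apply_ite abs, abs_mul, abs_zero]
    · positivity
  refine (sum_le_sum hterm).trans ?_
  rw [sum_comm, sq, sum_mul_sum, ← sum_product' _ _ fun a b => |w a| * |w b|]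
  refine sum_le_sum fun x _ => ?_
  rw [sum_ite_eq']
  split_ifs
  · rfl
  · positivity

theorem siftedSum_le_totalMass_div_selbergSum_add (hz : 0 < z) {C : ℝ}
    (hrem : ∀ d, d ∣ s.prodPrimes → |s.rem d| ≤ C) :
    s.siftedSum ≤ s.totalMass / selbergSum s z + C * (z : ℝ) ^ 2 := by
  set w := selbergWeight s z
  have hC : 0 ≤ C := (abs_nonneg _).trans (hrem 1 (one_dvd _))
  have hweights : ∑ d ∈ s.prodPrimes.divisors, |w d| ≤ z := by
    calc ∑ d ∈ s.prodPrimes.divisors, |w d|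
        = ∑ d ∈ s.prodPrimes.divisors with d ≤ z, |w d| := by
          refine (sum_filter_of_ne fun d _ hd => ?_).symm
          exact not_lt.1 fun h => hd (abs_eq_zero.2 (selbergWeight_eq_zero_of_lt h))
      _ ≤ ∑ d ∈ s.prodPrimes.divisors with d ≤ z, (1 : ℝ) :=
          sum_le_sum fun d hd =>
            abs_selbergWeight_le_one hz (Nat.dvd_of_mem_divisors (mem_filter.1 hd).1)
      _ ≤ ∑ _ ∈ Icc 1 z, (1 : ℝ) := by
          refine sum_le_sum_of_subset_of_nonneg (fun d hd => ?_) fun _ _ _ => zero_le_one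
          rw [mem_filter] at hd
          exact mem_Icc.2 ⟨Nat.pos_of_mem_divisors hd.1, hd.2⟩
      _ = z := by simp
  have herr : s.errSum (BoundingSieve.lambdaSquared w) ≤ C * (z : ℝ) ^ 2 := by
    calc s.errSum (BoundingSieve.lambdaSquared w)
        ≤ ∑ d ∈ s.prodPrimes.divisors, |BoundingSieve.lambdaSquared w d| * C :=
          sum_le_sum fun d hd =>
            mul_le_mul_of_nonneg_left (hrem d (Nat.dvd_of_mem_divisors hd)) (abs_nonneg _)
      _ = C * ∑ d ∈ s.prodPrimes.divisors, |BoundingSieve.lambdaSquared w d| := by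
          rw [← sum_mul, mul_comm]
      _ ≤ C * (∑ d ∈ s.prodPrimes.divisors, |w d|) ^ 2 := by
          gcongr
          exact sum_abs_lambdaSquared_le w s.prodPrimes_ne_zero
      _ ≤ C * (z : ℝ) ^ 2 := by gcongr
  have hmain := s.siftedSum_le_mainSum_errSum_of_upperMoebius _
    (BoundingSieve.upperMoebius_lambdaSquared w (selbergWeight_one hz))
  rw [mainSum_selbergWeight hz, ← div_eq_mul_inv] at hmain
  linarith

end SelbergSieve

section BrunTitchmarsh

theorem abs_card_Ioc_filter_modEq_sub_le_one {r : ℕ} (hr : 0 < r) (x h c : ℕ) :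
    |(#{n ∈ Ioc x (x + h) | n ≡ c [MOD r]} : ℝ) - h / r| ≤ 1 := by
  have hcard := Nat.Ioc_filter_modEq_card x (x + h) hr c
  set u : ℚ := ((x + h : ℕ) - c) / r
  set v : ℚ := ((x : ℚ) - c) / r
  have hr' : (r : ℚ) ≠ 0 := mod_cast hr.ne'
  have huv : u - v = h / r := by simp only [u, v]; push_cast; field_simp; ring
  have hvu : v ≤ u := by
    rw [← sub_nonneg, huv]
    positivity
  rw [max_eq_left (sub_nonneg.2 (Int.floor_mono hvu))] at hcard
  have hq : |(#{n ∈ Ioc x (x + h) | n ≡ c [MOD r]} : ℚ) - h / r| ≤ 1 := by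
    rw [← huv, ← Int.cast_natCast, hcard, Int.cast_sub, abs_le]
    constructor <;>
      linarith [Int.floor_le u, Int.lt_floor_add_one u, Int.floor_le v, Int.lt_floor_add_one v]
  have := (Rat.cast_le (K := ℝ)).2 hq
  push_cast at this
  exact this

theorem prod_one_sub_inv_mul_sum_inv_le (s : Finset ℕ) (hs : ∀ p ∈ s, p.Prime) (z : ℕ) :
    (∏ p ∈ s, (1 - (p : ℝ)⁻¹)) * ∑ n ∈ Icc 1 z, (n : ℝ)⁻¹ ≤
      ∑ n ∈ Icc 1 z with ∀ p ∈ s, ¬ p ∣ n, (n : ℝ)⁻¹ := by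
  induction s using Finset.induction_on with
  | empty => simp
  | insert p s hp ih =>
    obtain ⟨hpp, hss⟩ := (forall_mem_insert _ _ _).1 hs
    set A := {n ∈ Icc 1 z | ∀ q ∈ s, ¬ q ∣ n} with hA
    have hsplit : ∑ n ∈ Icc 1 z with ∀ q ∈ insert p s, ¬ q ∣ n, (n : ℝ)⁻¹ =
        ∑ n ∈ A, (n : ℝ)⁻¹ - ∑ n ∈ A with p ∣ n, (n : ℝ)⁻¹ := by
      rw [eq_sub_iff_add_eq, add_comm, ← sum_filter_add_sum_filter_not A (p ∣ ·), hA]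
      simp only [filter_filter, forall_mem_insert, and_comm]
    have hmultiples : ∑ n ∈ A with p ∣ n, (n : ℝ)⁻¹ ≤ (p : ℝ)⁻¹ * ∑ n ∈ A, (n : ℝ)⁻¹ := by
      have hsub : {n ∈ A | p ∣ n} ⊆ A.image (p * ·) := by
        intro n hn
        simp only [hA, mem_filter, mem_Icc] at hn
        obtain ⟨⟨⟨hn1, hnz⟩, hns⟩, k, rfl⟩ := hn
        refine mem_image_of_mem _ (mem_filter.2 ⟨mem_Icc.2 ⟨?_, ?_⟩, fun q hq hqk => ?_⟩)
        · exact Nat.pos_of_ne_zero (right_ne_zero_of_mul (Nat.one_le_iff_ne_zero.1 hn1))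
        · exact (Nat.le_mul_of_pos_left k hpp.pos).trans hnz
        · exact hns q hq (hqk.mul_left p)
      refine (sum_le_sum_of_subset_of_nonneg hsub fun _ _ _ => by positivity).trans_eq ?_
      rw [sum_image fun a _ b _ h => Nat.eq_of_mul_eq_mul_left hpp.pos h, mul_sum]
      exact sum_congr rfl fun n _ => by rw [Nat.cast_mul, mul_inv]
    have hp1 : 0 ≤ 1 - (p : ℝ)⁻¹ := sub_nonneg.2 (Nat.cast_inv_le_one p)
    have hstep := mul_le_mul_of_nonneg_left (ih hss) hp1
    rw [prod_insert hp, mul_assoc, hsplit]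
    linarith

theorem totient_div_mul_log_le_sum_inv_coprime (m z : ℕ) :
    (m.totient / m : ℝ) * Real.log (z + 1) ≤
      ∑ n ∈ Icc 1 z with m.Coprime n, (n : ℝ)⁻¹ := by
  rcases m.eq_zero_or_pos with rfl | hm
  · simpa using sum_nonneg fun _ _ => by positivity
  have htotient : (m.totient / m : ℝ) = ∏ p ∈ m.primeFactors, (1 - (p : ℝ)⁻¹) := by
    rw [div_eq_iff (by positivity), mul_comm]
    have := congrArg (Rat.cast : ℚ → ℝ) m.totient_eq_mul_prod_factors
    push_cast at this
    exact this
  have hcoprime : {n ∈ Icc 1 z | m.Coprime n} = {n ∈ Icc 1 z | ∀ p ∈ m.primeFactors, ¬ p ∣ n} :=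
    filter_congr fun n _ => by
      refine ⟨fun h p hp hpn => ?_, fun h => Nat.coprime_of_dvd fun p hp hpm hpn => ?_⟩
      · exact Nat.not_coprime_of_dvd_of_dvd (Nat.prime_of_mem_primeFactors hp).one_lt
          (Nat.dvd_of_mem_primeFactors hp) hpn h
      · exact h p (Nat.mem_primeFactors.2 ⟨hp, hpm, hm.ne'⟩) hpn
  have hlog : Real.log (z + 1) ≤ ∑ n ∈ Icc 1 z, (n : ℝ)⁻¹ := by
    have := log_add_one_le_harmonic z
    rw [harmonic_eq_sum_Icc] at this
    push_cast at this
    exact this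
  rw [hcoprime, htotient]
  refine le_trans ?_ (prod_one_sub_inv_mul_sum_inv_le _ (fun _ => Nat.prime_of_mem_primeFactors) z)
  gcongr
  exact prod_nonneg fun p _ => sub_nonneg.2 (Nat.cast_inv_le_one p)

theorem sum_Icc_inv_sq_le_two (z : ℕ) : ∑ b ∈ Icc 1 z, ((b : ℝ) ^ 2)⁻¹ ≤ 2 := by
  rcases z.eq_zero_or_pos with rfl | hz
  · simp
  have htail := sum_Ioc_inv_sq_le_sub (α := ℝ) one_ne_zero hz
  rw [← Ioc_insert_left (show 1 ≤ z from hz), sum_insert left_notMem_Ioc]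
  have : 0 ≤ (z : ℝ)⁻¹ := by positivity
  norm_num at htail ⊢
  linarith

theorem sum_inv_coprime_le_two_mul_sum_inv_squarefree (m z : ℕ) :
    ∑ n ∈ Icc 1 z with m.Coprime n, (n : ℝ)⁻¹ ≤
      2 * ∑ l ∈ Icc 1 z with m.Coprime l ∧ Squarefree l, (l : ℝ)⁻¹ := by
  choose a b hab ha using Nat.sq_mul_squarefree
  set A := {l ∈ Icc 1 z | m.Coprime l ∧ Squarefree l}
  have hmaps : ∀ n ∈ {n ∈ Icc 1 z | m.Coprime n}, (a n, b n) ∈ A ×ˢ Icc 1 z := by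
    intro n hn
    obtain ⟨hnz, hmn⟩ := mem_filter.1 hn
    obtain ⟨hn1, hnz⟩ := mem_Icc.1 hnz
    have han : a n ∣ n := ⟨b n ^ 2, by rw [mul_comm, hab]⟩
    have hbn : b n ∣ n := ⟨b n * a n, by rw [← mul_assoc, ← sq, hab]⟩
    simp only [A, mem_product, mem_filter, mem_Icc]
    exact ⟨⟨⟨Nat.pos_of_dvd_of_pos han hn1, (Nat.le_of_dvd hn1 han).trans hnz⟩,
      hmn.coprime_dvd_right han, ha n⟩, Nat.pos_of_dvd_of_pos hbn hn1,
      (Nat.le_of_dvd hn1 hbn).trans hnz⟩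
  have hinj : Function.Injective fun n => (a n, b n) := fun n n' h => by
    obtain ⟨hab', hbb'⟩ := Prod.mk.inj h
    rw [← hab n, ← hab n', hab', hbb']
  calc ∑ n ∈ Icc 1 z with m.Coprime n, (n : ℝ)⁻¹
      = ∑ n ∈ Icc 1 z with m.Coprime n, (a n : ℝ)⁻¹ * ((b n : ℝ) ^ 2)⁻¹ :=
        sum_congr rfl fun n _ => by rw [← mul_inv, mul_comm, ← Nat.cast_pow, ← Nat.cast_mul, hab]
    _ ≤ ∑ x ∈ A ×ˢ Icc 1 z, (x.1 : ℝ)⁻¹ * ((x.2 : ℝ) ^ 2)⁻¹ := by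
        rw [← sum_image (f := fun x : ℕ × ℕ => (x.1 : ℝ)⁻¹ * ((x.2 : ℝ) ^ 2)⁻¹) hinj.injOn]
        exact sum_le_sum_of_subset_of_nonneg (image_subset_iff.2 hmaps)
          fun _ _ _ => by positivity
    _ = (∑ l ∈ A, (l : ℝ)⁻¹) * ∑ b ∈ Icc 1 z, ((b : ℝ) ^ 2)⁻¹ := by
        rw [sum_mul_sum, ← sum_product' _ _ fun a b : ℕ => (a : ℝ)⁻¹ * ((b : ℝ) ^ 2)⁻¹]
    _ ≤ (∑ l ∈ A, (l : ℝ)⁻¹) * 2 := by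
        gcongr
        exact sum_Icc_inv_sq_le_two z
    _ = _ := mul_comm _ _

/-- The primes up to `z` that do not divide `m`: those by which a residue class modulo `m` can be
sifted. -/
def siftingPrimes (m z : ℕ) : Finset ℕ := {p ∈ z.primesLE | ¬ p ∣ m}

theorem prime_of_mem_siftingPrimes {m z p : ℕ} (hp : p ∈ siftingPrimes m z) : p.Prime :=
  (Nat.mem_primesLE.1 (mem_filter.1 hp).1).2

theorem coprime_prod_siftingPrimes (m z : ℕ) : (∏ p ∈ siftingPrimes m z, p).Coprime m :=
  Nat.Coprime.prod_left fun _ hp =>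
    ((prime_of_mem_siftingPrimes hp).coprime_iff_not_dvd).2 (mem_filter.1 hp).2

theorem squarefree_prod_siftingPrimes (m z : ℕ) : Squarefree (∏ p ∈ siftingPrimes m z, p) :=
  squarefree_prod_of_pairwise_isCoprime
    (fun _ hp _ hq hpq => Nat.coprime_iff_isRelPrime.1 <|
      (Nat.coprime_primes (prime_of_mem_siftingPrimes hp) (prime_of_mem_siftingPrimes hq)).2 hpq)
    fun _ hp => (prime_of_mem_siftingPrimes hp).squarefree

theorem dvd_prod_siftingPrimes {m z l : ℕ} (hl : Squarefree l) (hlz : l ≤ z) (hml : m.Coprime l) :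
    l ∣ ∏ p ∈ siftingPrimes m z, p := by
  rw [← Nat.prod_primeFactors_of_squarefree hl]
  refine prod_dvd_prod_of_subset _ _ _ fun p hp => ?_
  have hpp := Nat.prime_of_mem_primeFactors hp
  have hpl := Nat.dvd_of_mem_primeFactors hp
  refine mem_filter.2 ⟨Nat.mem_primesLE.2
    ⟨(Nat.le_of_dvd (Nat.pos_of_ne_zero hl.ne_zero) hpl).trans hlz, hpp⟩, fun hpm => ?_⟩
  exact Nat.not_coprime_of_dvd_of_dvd hpp.one_lt hpm hpl hml

/-- The sieve removing from the integers of `(x, x + h]` congruent to `a` modulo `m` the multiples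
of the primes up to `z` not dividing `m`. -/
noncomputable def modEqSieve (m a x h z : ℕ) : BoundingSieve where
  support := {n ∈ Ioc x (x + h) | n ≡ a [MOD m]}
  prodPrimes := ∏ p ∈ siftingPrimes m z, p
  prodPrimes_squarefree := squarefree_prod_siftingPrimes m z
  weights _ := 1
  weights_nonneg _ := zero_le_one
  totalMass := h / m
  nu := ⟨fun d => (d : ℝ)⁻¹, by simp⟩
  nu_mult := ⟨by simp, fun {d e} _ => by simp [mul_comm]⟩
  nu_pos_of_prime p hp _ := by simpa using hp.pos
  nu_lt_one_of_prime p hp _ := by simpa using inv_lt_one_of_one_lt₀ (Nat.one_lt_cast.2 hp.one_lt)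

variable {m : ℕ} (a x h z : ℕ)

theorem abs_rem_modEqSieve_le_one (hm : 0 < m) {d : ℕ}
    (hd : d ∣ (modEqSieve m a x h z).prodPrimes) : |(modEqSieve m a x h z).rem d| ≤ 1 := by
  have hcop : d.Coprime m := (coprime_prod_siftingPrimes m z).coprime_dvd_left hd
  have hd0 : 0 < d := Nat.pos_of_ne_zero
    (ne_zero_of_dvd_ne_zero (squarefree_prod_siftingPrimes m z).ne_zero hd)
  obtain ⟨c, hc0, hca⟩ := Nat.chineseRemainder hcop 0 a
  have hclass : ∀ n, n ≡ a [MOD m] ∧ d ∣ n ↔ n ≡ c [MOD d * m] := fun n => by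
    rw [← Nat.modEq_and_modEq_iff_modEq_mul hcop, ← Nat.modEq_zero_iff_dvd, and_comm]
    exact and_congr ⟨fun h => h.trans hc0.symm, fun h => h.trans hc0⟩
      ⟨fun h => h.trans hca.symm, fun h => h.trans hca⟩
  have hmult : (modEqSieve m a x h z).multSum d = #{n ∈ Ioc x (x + h) | n ≡ c [MOD d * m]} := by
    simp only [BoundingSieve.multSum, modEqSieve, ← sum_filter, filter_filter, hclass]
    simp
  have hmass : (modEqSieve m a x h z).nu d * (modEqSieve m a x h z).totalMass =
      h / (d * m : ℕ) := by
    simp only [modEqSieve, ArithmeticFunction.coe_mk]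
    push_cast
    rw [div_mul_eq_div_div_swap, inv_mul_eq_div]
  rw [BoundingSieve.rem, hmult, hmass]
  exact abs_card_Ioc_filter_modEq_sub_le_one (mul_pos hd0 hm) x h c

theorem nu_le_selbergTerms {s : BoundingSieve} {l : ℕ} (hl : l ∣ s.prodPrimes) :
    s.nu l ≤ s.selbergTerms l := by
  rw [s.selbergTerms_apply]
  refine le_mul_of_one_le_right (s.nu_pos_of_dvd_prodPrimes hl).le
    (Finset.one_le_prod fun p hp => ?_)
  have hpp := Nat.prime_of_mem_primeFactors hp
  have hpP := (Nat.dvd_of_mem_primeFactors hp).trans hl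
  exact (one_le_inv₀ (sub_pos.2 (s.nu_lt_one_of_prime p hpp hpP))).2
    (sub_le_self 1 (s.nu_pos_of_prime p hpp hpP).le)

theorem totient_div_mul_log_le_two_mul_selbergSum :
    (m.totient / m : ℝ) * Real.log (z + 1) ≤ 2 * selbergSum (modEqSieve m a x h z) z := by
  refine (totient_div_mul_log_le_sum_inv_coprime m z).trans <|
    (sum_inv_coprime_le_two_mul_sum_inv_squarefree m z).trans ?_
  set s := modEqSieve m a x h z
  have hdvd : ∀ l ∈ {l ∈ Icc 1 z | m.Coprime l ∧ Squarefree l}, l ∣ s.prodPrimes ∧ l ≤ z := by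
    intro l hl
    obtain ⟨hlz, hml, hsq⟩ := mem_filter.1 hl
    exact ⟨dvd_prod_siftingPrimes hsq (mem_Icc.1 hlz).2 hml, (mem_Icc.1 hlz).2⟩
  gcongr
  calc ∑ l ∈ Icc 1 z with m.Coprime l ∧ Squarefree l, (l : ℝ)⁻¹
      ≤ ∑ l ∈ Icc 1 z with m.Coprime l ∧ Squarefree l, s.selbergTerms l :=
        sum_le_sum fun l hl => nu_le_selbergTerms (s := s) (hdvd l hl).1
    _ ≤ selbergSum s z :=
        sum_le_sum_of_subset_of_nonneg
          (fun l hl => mem_filter.2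
            ⟨Nat.mem_divisors.2 ⟨(hdvd l hl).1, s.prodPrimes_ne_zero⟩, (hdvd l hl).2⟩)
          fun l hl _ => (s.selbergTerms_pos (Nat.dvd_of_mem_divisors (mem_filter.1 hl).1)).le

/-- The sifted set contains every prime of the residue class that exceeds `z`. -/
theorem card_primes_modEq_le_siftedSum_add :
    (#{q ∈ Ioc x (x + h) | q.Prime ∧ q ≡ a [MOD m]} : ℝ) ≤
      (modEqSieve m a x h z).siftedSum + z := by
  set P := ∏ p ∈ siftingPrimes m z, p
  have hsub : {q ∈ Ioc x (x + h) | q.Prime ∧ q ≡ a [MOD m]} ⊆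
      {n ∈ Ioc x (x + h) | n ≡ a [MOD m] ∧ P.Coprime n} ∪ Icc 1 z := by
    intro q hq
    obtain ⟨hqx, hq, hqa⟩ := mem_filter.1 hq
    rw [mem_union, mem_filter, mem_Icc, or_iff_not_imp_right]
    refine fun hqz => ⟨hqx, hqa, Nat.Coprime.prod_left fun p hp => ?_⟩
    refine (Nat.coprime_primes (prime_of_mem_siftingPrimes hp) hq).2 ?_
    rintro rfl
    exact hqz ⟨hq.one_lt.le, (Nat.mem_primesLE.1 (mem_filter.1 hp).1).1⟩
  have hsifted : (modEqSieve m a x h z).siftedSum =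
      #{n ∈ Ioc x (x + h) | n ≡ a [MOD m] ∧ P.Coprime n} := by
    rw [BoundingSieve.siftedSum, ← sum_filter, ← filter_filter]
    exact (sum_const _).trans (nsmul_one _)
  rw [hsifted]
  have hcard := (card_le_card hsub).trans (card_union_le _ _)
  rw [Nat.card_Icc, Nat.add_sub_cancel] at hcard
  exact_mod_cast hcard

variable {a x h z}

theorem sqrt_mul_log_le {t : ℝ} (ht : 0 < t) : √t * Real.log t ≤ 2 * t := by
  have hlog : Real.log t = 2 * Real.log √t := by rw [Real.log_sqrt ht.le]; ring
  have hle := Real.log_le_self (Real.sqrt_nonneg t)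
  calc √t * Real.log t = √t * (2 * Real.log √t) := by rw [hlog]
    _ ≤ √t * (2 * √t) := by gcongr
    _ = 2 * t := by rw [mul_left_comm, Real.mul_self_sqrt ht.le]

theorem floor_sqrt_sqrt_sq_le (t : ℝ) : (⌊√√t⌋₊ : ℝ) ^ 2 ≤ √t := by
  calc (⌊√√t⌋₊ : ℝ) ^ 2 ≤ √√t ^ 2 := by
        gcongr
        exact Nat.floor_le (Real.sqrt_nonneg _)
    _ = √t := Real.sq_sqrt (Real.sqrt_nonneg t)

theorem log_div_four_le_log_floor_sqrt_sqrt {t : ℝ} (ht : 0 < t) :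
    Real.log t / 4 ≤ Real.log (⌊√√t⌋₊ + 1) := by
  calc Real.log t / 4 = Real.log √√t := by
        rw [Real.log_sqrt (Real.sqrt_nonneg _), Real.log_sqrt ht.le]; ring
    _ ≤ Real.log (⌊√√t⌋₊ + 1) := Real.log_le_log (by positivity) (Nat.lt_floor_add_one _).le

/-- The Brun–Titchmarsh inequality, with a constant that is not optimised: sift to the level
`√(h / m)`. -/
theorem card_primes_Ioc_modEq_le (hm : 0 < m) (hmh : m < h) :
    (#{q ∈ Ioc x (x + h) | q.Prime ∧ q ≡ a [MOD m]} : ℝ) ≤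
      12 * h / (m.totient * Real.log (h / m)) := by
  set t : ℝ := h / m
  have ht : 1 < t := (one_lt_div (by positivity)).2 (mod_cast hmh)
  have ht0 : 0 < t := zero_lt_one.trans ht
  have hlog : 0 < Real.log t := Real.log_pos ht
  have hφm : (m.totient : ℝ) ≤ m := mod_cast m.totient_le
  set z := ⌊√√t⌋₊
  have hz : 0 < z := Nat.floor_pos.2 (Real.one_le_sqrt.2 (Real.one_le_sqrt.2 ht.le))
  set s := modEqSieve m a x h z
  have hS : m.totient / m * Real.log t / 8 ≤ selbergSum s z := by
    have hsum := totient_div_mul_log_le_two_mul_selbergSum (m := m) a x h z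
    have := mul_le_mul_of_nonneg_left (log_div_four_le_log_floor_sqrt_sqrt ht0)
      (by positivity : (0 : ℝ) ≤ m.totient / m)
    linarith
  have hmain : s.totalMass / selbergSum s z ≤ 8 * h / (m.totient * Real.log t) := by
    calc s.totalMass / selbergSum s z ≤ (h / m) / (m.totient / m * Real.log t / 8) :=
          div_le_div_of_nonneg_left ht0.le (by positivity) hS
      _ = 8 * h / (m.totient * Real.log t) := by field_simp
  have herr : (z : ℝ) ^ 2 + z ≤ 4 * h / (m.totient * Real.log t) := by
    have hzz : (z : ℝ) ≤ (z : ℝ) ^ 2 := mod_cast Nat.le_self_pow two_ne_zero z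
    calc (z : ℝ) ^ 2 + z ≤ 2 * √t := by linarith [floor_sqrt_sqrt_sq_le t]
      _ ≤ 4 * t / Real.log t := by
          rw [le_div_iff₀ hlog]
          linarith [sqrt_mul_log_le ht0]
      _ = 4 * h / (m * Real.log t) := by simp only [t]; field_simp
      _ ≤ 4 * h / (m.totient * Real.log t) := by gcongr
  have hsieve := siftedSum_le_totalMass_div_selbergSum_add hz
    fun d hd => abs_rem_modEqSieve_le_one a x h z hm hd
  calc (#{q ∈ Ioc x (x + h) | q.Prime ∧ q ≡ a [MOD m]} : ℝ)
      ≤ s.siftedSum + z := card_primes_modEq_le_siftedSum_add a x h z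
    _ ≤ 8 * h / (m.totient * Real.log t) + 4 * h / (m.totient * Real.log t) := by linarith
    _ = 12 * h / (m.totient * Real.log t) := by ring

end BrunTitchmarsh

section DyadicSums

theorem sum_Ioc_mul_le_sum_dyadic {f a : ℕ → ℝ} {m : ℕ} (hf : AntitoneOn f (Set.Ici m))
    (ha : ∀ n, 0 ≤ a n) (K : ℕ) :
    ∑ n ∈ Ioc m (m * 2 ^ K), f n * a n ≤
      ∑ i ∈ range K, f (m * 2 ^ i) * ∑ n ∈ Ioc (m * 2 ^ i) (m * 2 ^ (i + 1)), a n := by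
  have hmle : ∀ i, m ≤ m * 2 ^ i := fun i => Nat.le_mul_of_pos_right m (by positivity)
  induction K with
  | zero => simp
  | succ K ih =>
    have hmono : m * 2 ^ K ≤ m * 2 ^ (K + 1) := by gcongr <;> simp
    rw [← sum_Ioc_consecutive _ (hmle K) hmono, sum_range_succ, mul_sum]
    refine add_le_add ih (sum_le_sum fun n hn => mul_le_mul_of_nonneg_right ?_ (ha n))
    have hn := (mem_Ioc.1 hn).1.le
    exact hf (hmle K) ((hmle K).trans hn) hn

theorem harmonic_log_two_add_one_le {N : ℕ} (hN : 3 ≤ N) :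
    (harmonic (Nat.log 2 N + 1) : ℝ) ≤ Real.log (Real.log N) + 2 := by
  have hlogN : 1 < Real.log N := by
    rw [Real.lt_log_iff_exp_lt (by positivity)]
    exact Real.exp_one_lt_three.trans_le (mod_cast hN)
  have hK : ((Nat.log 2 N + 1 : ℕ) : ℝ) ≤ Real.exp 1 * Real.log N := by
    have hfloor : (Nat.log 2 N : ℝ) ≤ Real.log N / Real.log 2 :=
      Real.natLog_le_logb N 2
    have hlog2 : Real.log N / Real.log 2 ≤ 3 / 2 * Real.log N := by
      rw [div_le_iff₀ (Real.log_pos one_lt_two)]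
      nlinarith [Real.log_two_gt_d9]
    push_cast
    nlinarith [Real.exp_one_gt_d9]
  have hlogK : Real.log (Nat.log 2 N + 1 : ℕ) ≤ 1 + Real.log (Real.log N) := by
    rw [← Real.log_exp 1, ← Real.log_mul (Real.exp_ne_zero 1) (by positivity)]
    exact Real.log_le_log (by positivity) hK
  linarith [harmonic_le_one_add_log (Nat.log 2 N + 1)]

theorem card_primes_dyadic_modEq_le {m : ℕ} (hm : 0 < m) (a i : ℕ) :
    (#{q ∈ Ioc (m * 2 ^ i) (m * 2 ^ (i + 1)) | q.Prime ∧ q ≡ a [MOD m]} : ℝ) ≤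
      35 / m.totient * (m * 2 ^ i) / (i + 1) := by
  have hsub : Ioc (m * 2 ^ i) (m * 2 ^ (i + 1)) ⊆
      Ioc (m * 2 ^ i) (m * 2 ^ i + m * 2 ^ (i + 1)) := Ioc_subset_Ioc_right (by omega)
  have hlt : m < m * 2 ^ (i + 1) := lt_mul_of_one_lt_right hm (Nat.one_lt_two_pow (by omega))
  have hlog : Real.log ((m * 2 ^ (i + 1) : ℕ) / m) = (i + 1) * Real.log 2 := by
    push_cast
    rw [mul_div_cancel_left₀ _ (by positivity), Real.log_pow]
    push_cast
    rfl
  have hlog2 : 12 * 2 / Real.log 2 ≤ 35 := by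
    rw [div_le_iff₀ (Real.log_pos one_lt_two)]
    linarith [Real.log_two_gt_d9]
  calc (#{q ∈ Ioc (m * 2 ^ i) (m * 2 ^ (i + 1)) | q.Prime ∧ q ≡ a [MOD m]} : ℝ)
      ≤ #{q ∈ Ioc (m * 2 ^ i) (m * 2 ^ i + m * 2 ^ (i + 1)) | q.Prime ∧ q ≡ a [MOD m]} :=
        mod_cast card_le_card (filter_subset_filter _ hsub)
    _ ≤ 12 * (m * 2 ^ (i + 1) : ℕ) / (m.totient * ((i + 1) * Real.log 2)) :=
        hlog ▸ card_primes_Ioc_modEq_le hm hlt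
    _ = 12 * 2 / Real.log 2 / m.totient * (m * 2 ^ i) / (i + 1) := by
        push_cast
        field_simp
        ring
    _ ≤ 35 / m.totient * (m * 2 ^ i) / (i + 1) := by gcongr

theorem sum_inv_primes_modEq_le {m N : ℕ} (hm : 0 < m) (hN : 3 ≤ N) (a : ℕ) :
    ∑ q ∈ Ioc m N with q.Prime ∧ q ≡ a [MOD m], (q : ℝ)⁻¹ ≤
      35 * (Real.log (Real.log N) + 2) / m.totient := by
  set K := Nat.log 2 N + 1
  set b : ℕ → ℝ := fun q => if q.Prime ∧ q ≡ a [MOD m] then 1 else 0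
  have hb : ∀ q, 0 ≤ b q := fun q => by positivity
  have hNK : N ≤ m * 2 ^ K :=
    (Nat.lt_pow_succ_log_self one_lt_two N).le.trans (Nat.le_mul_of_pos_left _ hm)
  have hanti : AntitoneOn (fun q : ℕ => (q : ℝ)⁻¹) (Set.Ici m) := fun q hq r _ hqr => by
    have : 0 < q := hm.trans_le hq
    simp only
    gcongr
  have hblock : ∀ i ∈ range K,
      ((m * 2 ^ i : ℕ) : ℝ)⁻¹ * ∑ q ∈ Ioc (m * 2 ^ i) (m * 2 ^ (i + 1)), b q ≤
        35 / m.totient * ((i + 1 : ℕ) : ℝ)⁻¹ := by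
    intro i _
    rw [sum_boole, inv_mul_le_iff₀ (by positivity)]
    refine (card_primes_dyadic_modEq_le hm a i).trans_eq ?_
    push_cast
    ring
  calc ∑ q ∈ Ioc m N with q.Prime ∧ q ≡ a [MOD m], (q : ℝ)⁻¹
      = ∑ q ∈ Ioc m N, (q : ℝ)⁻¹ * b q := by simp only [sum_filter, b, mul_ite, mul_one, mul_zero]
    _ ≤ ∑ q ∈ Ioc m (m * 2 ^ K), (q : ℝ)⁻¹ * b q :=
        sum_le_sum_of_subset_of_nonneg (Ioc_subset_Ioc_right hNK)
          fun q _ _ => mul_nonneg (by positivity) (hb q)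
    _ ≤ ∑ i ∈ range K, 35 / m.totient * ((i + 1 : ℕ) : ℝ)⁻¹ :=
        (sum_Ioc_mul_le_sum_dyadic hanti hb K).trans (sum_le_sum hblock)
    _ = 35 * (harmonic K : ℝ) / m.totient := by
        rw [← mul_sum, harmonic]
        push_cast
        ring
    _ ≤ 35 * (Real.log (Real.log N) + 2) / m.totient := by
        gcongr
        exact harmonic_log_two_add_one_le hN

theorem sum_log_primes_Ioc_le (x y : ℕ) :
    ∑ p ∈ Ioc x y with p.Prime, Real.log p ≤ Real.log 4 * y := by
  have htheta := Chebyshev.theta_le_log4_mul_x (x := y) y.cast_nonneg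
  rw [Chebyshev.theta, Nat.floor_natCast] at htheta
  refine le_trans (sum_le_sum_of_subset_of_nonneg ?_ fun p _ _ => by positivity) htheta
  exact filter_subset_filter _ (Ioc_subset_Ioc_left x.zero_le)

theorem inv_sq_mul_log_mul_sum_log_dyadic_le {M : ℕ} (hM : 2 ≤ M) (i : ℕ) :
    (((M * 2 ^ i : ℕ) : ℝ) ^ 2 * Real.log (M * 2 ^ i : ℕ))⁻¹ *
        ∑ p ∈ Ioc (M * 2 ^ i) (M * 2 ^ (i + 1)) with p.Prime, Real.log p ≤
      2 * Real.log 4 / (M * Real.log M) * (1 / 2) ^ i := by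
  have hlogM : 0 < Real.log M := Real.log_pos (mod_cast hM)
  have hlog : Real.log M ≤ Real.log (M * 2 ^ i : ℕ) :=
    Real.log_le_log (by positivity) (mod_cast Nat.le_mul_of_pos_right M (by positivity))
  calc (((M * 2 ^ i : ℕ) : ℝ) ^ 2 * Real.log (M * 2 ^ i : ℕ))⁻¹ *
        ∑ p ∈ Ioc (M * 2 ^ i) (M * 2 ^ (i + 1)) with p.Prime, Real.log p
      ≤ (((M * 2 ^ i : ℕ) : ℝ) ^ 2 * Real.log M)⁻¹ * (Real.log 4 * (M * 2 ^ (i + 1) : ℕ)) := by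
        gcongr
        exact sum_log_primes_Ioc_le _ _
    _ = 2 * Real.log 4 / (M * Real.log M) * (1 / 2) ^ i := by
        push_cast
        rw [one_div, inv_pow]
        field_simp
        ring

/-- Weighting the primes by `log p` reduces the sum to Chebyshev's bound on `θ`. -/
theorem sum_inv_sq_primes_le {M : ℕ} (hM : 2 ≤ M) (N : ℕ) :
    ∑ p ∈ Ioc M N with p.Prime, ((p : ℝ) ^ 2)⁻¹ ≤ 4 * Real.log 4 / (M * Real.log M) := by
  set b : ℕ → ℝ := fun p => if p.Prime then Real.log p else 0
  set f : ℕ → ℝ := fun p => ((p : ℝ) ^ 2 * Real.log p)⁻¹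
  have hlogM : 0 < Real.log M := Real.log_pos (mod_cast hM)
  have hb : ∀ p, 0 ≤ b p := fun p => by
    simp only [b]
    split_ifs <;> positivity
  have hf : ∀ p, 0 ≤ f p := fun p => by positivity
  have hanti : AntitoneOn f (Set.Ici M) := fun p hp r _ hpr => by
    have hp1 : (1 : ℝ) < p := Nat.one_lt_cast.2 (hM.trans hp)
    have := Real.log_pos hp1
    simp only [f]
    gcongr
  have hblock : ∀ i ∈ range N, f (M * 2 ^ i) * ∑ p ∈ Ioc (M * 2 ^ i) (M * 2 ^ (i + 1)), b p ≤
      2 * Real.log 4 / (M * Real.log M) * (1 / 2) ^ i := fun i _ => by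
    simpa only [f, b, ← sum_filter] using inv_sq_mul_log_mul_sum_log_dyadic_le hM i
  calc ∑ p ∈ Ioc M N with p.Prime, ((p : ℝ) ^ 2)⁻¹
      = ∑ p ∈ Ioc M N, f p * b p := by
        rw [sum_filter]
        refine sum_congr rfl fun p hp => ?_
        have : Real.log p ≠ 0 := (Real.log_pos (mod_cast hM.trans (mem_Ioc.1 hp).1.le)).ne'
        simp only [f, b]
        split_ifs
        · field_simp
        · rw [mul_zero]
    _ ≤ ∑ p ∈ Ioc M (M * 2 ^ N), f p * b p := by
        refine sum_le_sum_of_subset_of_nonneg (Ioc_subset_Ioc_right ?_)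
          fun p _ _ => mul_nonneg (hf p) (hb p)
        exact Nat.lt_two_pow_self.le.trans (Nat.le_mul_of_pos_left _ (by omega))
    _ ≤ ∑ i ∈ range N, 2 * Real.log 4 / (M * Real.log M) * (1 / 2) ^ i :=
        (sum_Ioc_mul_le_sum_dyadic hanti hb N).trans (sum_le_sum hblock)
    _ ≤ 2 * Real.log 4 / (M * Real.log M) * 2 := by
        rw [← mul_sum]
        gcongr
        exact sum_geometric_two_le N
    _ = 4 * Real.log 4 / (M * Real.log M) := by ring

end DyadicSums

section Density

open Filter Topology

theorem hasDensityOne_iff_tendsto_card_notMem {D : Set ℕ} [DecidablePred (· ∈ D)] :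
    HasDensityOne D ↔
      Tendsto (fun N : ℕ => (#{n ∈ Icc 1 N | n ∉ D} : ℝ) / N) atTop (𝓝 0) := by
  have hcompl : (fun N : ℕ => (Nat.card {n : ℕ | n ∈ Icc 1 N ∧ n ∈ D} : ℝ) / N) =ᶠ[atTop]
      fun N : ℕ => 1 - (#{n ∈ Icc 1 N | n ∉ D} : ℝ) / N := by
    filter_upwards [eventually_gt_atTop 0] with N hN
    have hcard := card_filter_add_card_filter_not (s := Icc 1 N) (· ∈ D)
    rw [Nat.card_Icc, Nat.add_sub_cancel] at hcard
    rw [Nat.card_coe_set_eq, ← coe_filter, Set.ncard_coe_finset, eq_sub_iff_add_eq, ← add_div,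
      ← Nat.cast_add, hcard, div_self (by positivity)]
  rw [HasDensityOne, tendsto_congr' hcompl]
  exact ⟨fun h => by simpa using h.const_sub 1, fun h => by simpa using h.const_sub 1⟩

theorem HasDensityOne.mono {D₁ D₂ : Set ℕ} (h : HasDensityOne D₁) (hsub : D₁ ⊆ D₂) :
    HasDensityOne D₂ := by
  classical
  rw [hasDensityOne_iff_tendsto_card_notMem] at h ⊢
  refine squeeze_zero (fun N => by positivity) (fun N => ?_) h
  gcongr

theorem HasDensityOne.inter {D₁ D₂ : Set ℕ} (h₁ : HasDensityOne D₁) (h₂ : HasDensityOne D₂) :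
    HasDensityOne (D₁ ∩ D₂) := by
  classical
  rw [hasDensityOne_iff_tendsto_card_notMem] at h₁ h₂ ⊢
  refine squeeze_zero (fun N => by positivity) (fun N => ?_) (by simpa using h₁.add h₂)
  rw [← add_div]
  gcongr
  simp only [Set.mem_inter_iff, not_and_or, filter_or]
  exact_mod_cast card_union_le _ _

theorem tendsto_log_log_natCast_atTop :
    Tendsto (fun N : ℕ => Real.log (Real.log N)) atTop atTop :=
  Real.tendsto_log_atTop.comp (Real.tendsto_log_atTop.comp tendsto_natCast_atTop_atTop)

theorem half_log_log_le_log_log {n N : ℕ} (hN : 2 * Real.log 2 ≤ Real.log (Real.log N))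
    (hn : N.sqrt < n) : Real.log (Real.log N) / 2 ≤ Real.log (Real.log n) := by
  have hN0 : N ≠ 0 := by
    rintro rfl
    norm_num at hN
    linarith [Real.log_pos one_lt_two]
  have hlogN : Real.log N ≠ 0 := by
    intro h
    rw [h, Real.log_zero] at hN
    linarith [Real.log_pos one_lt_two]
  have hlog : Real.log N / 2 ≤ Real.log n := by
    have hle : Real.log N ≤ Real.log ((n : ℝ) ^ 2) :=
      Real.log_le_log (by positivity) (mod_cast (Nat.sqrt_lt'.1 hn).le)
    rw [Real.log_pow] at hle
    push_cast at hle
    linarith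
  calc Real.log (Real.log N) / 2 ≤ Real.log (Real.log N) - Real.log 2 := by linarith
    _ = Real.log (Real.log N / 2) := (Real.log_div hlogN two_ne_zero).symm
    _ ≤ Real.log (Real.log n) :=
        Real.log_le_log (by have := Real.log_natCast_nonneg N; positivity) hlog

open scoped Classical in
/-- Discarding the `n ≤ √N` costs nothing and allows the threshold `log log n` to be replaced by
one that depends only on `N`. -/
theorem hasDensityOne_setOf_notMem_log_log {E : ℝ → Set ℕ} (hE : Antitone E)
    (hcount : Tendsto (fun N : ℕ =>
      (#{n ∈ Icc 1 N | n ∈ E (Real.log (Real.log N) / 2)} : ℝ) / N) atTop (𝓝 0)) :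
    HasDensityOne {n : ℕ | n ∉ E (Real.log (Real.log n))} := by
  have hsqrt : Tendsto (fun N : ℕ => (N.sqrt : ℝ) / N) atTop (𝓝 0) := by
    refine squeeze_zero (fun N => by positivity) (fun N => ?_)
      ((tendsto_inv_atTop_zero.comp Real.tendsto_sqrt_atTop).comp tendsto_natCast_atTop_atTop)
    simp only [Function.comp_apply, ← Real.sqrt_div_self]
    gcongr
    exact Real.nat_sqrt_le_real_sqrt
  rw [hasDensityOne_iff_tendsto_card_notMem]
  refine squeeze_zero' (.of_forall fun N => by positivity) ?_
    (by simpa only [add_zero] using hsqrt.add hcount)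
  filter_upwards [tendsto_log_log_natCast_atTop.eventually_ge_atTop (2 * Real.log 2)] with N hN
  rw [← add_div, ← Nat.cast_add]
  refine div_le_div_of_nonneg_right (Nat.cast_le.2 ?_) N.cast_nonneg
  calc _ ≤ #(Icc 1 N.sqrt ∪ {n ∈ Icc 1 N | n ∈ E (Real.log (Real.log N) / 2)}) := by
        refine card_le_card fun n hn => ?_
        obtain ⟨hnN, hnE⟩ := mem_filter.1 hn
        rw [mem_union, mem_filter, or_iff_not_imp_left, mem_Icc, not_and, not_le]
        exact fun hlarge => ⟨hnN, hE (half_log_log_le_log_log hN (hlarge (mem_Icc.1 hnN).1))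
          (not_not.1 hnE)⟩
    _ ≤ N.sqrt + #{n ∈ Icc 1 N | n ∈ E (Real.log (Real.log N) / 2)} := by
        simpa only [Nat.card_Icc, Nat.add_sub_cancel] using card_union_le (Icc 1 N.sqrt) _

end Density

section Exceptions

open Filter Topology

theorem card_Icc_filter_dvd_le (N d : ℕ) : (#{n ∈ Icc 1 N | d ∣ n} : ℝ) ≤ N / d := by
  have hIcc : Icc 1 N = Ioc 0 N := rfl
  rw [hIcc, Nat.Ioc_filter_dvd_card_eq_div]
  exact Nat.cast_div_le

theorem card_le_mul_sum_inv_of_exists_dvd {ι : Type*} {T : Finset ι} {d : ι → ℕ} {N : ℕ}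
    {B : Finset ℕ} (hB : ∀ n ∈ B, n ∈ Icc 1 N ∧ ∃ i ∈ T, d i ∣ n) :
    (#B : ℝ) ≤ N * ∑ i ∈ T, (d i : ℝ)⁻¹ := by
  classical
  have hsub : B ⊆ T.biUnion fun i => {n ∈ Icc 1 N | d i ∣ n} := fun n hn => by
    obtain ⟨hnN, i, hi, hdvd⟩ := hB n hn
    exact mem_biUnion.2 ⟨i, hi, mem_filter.2 ⟨hnN, hdvd⟩⟩
  calc (#B : ℝ) ≤ ∑ i ∈ T, (#{n ∈ Icc 1 N | d i ∣ n} : ℝ) :=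
        mod_cast (card_le_card hsub).trans card_biUnion_le
    _ ≤ ∑ i ∈ T, (N / d i : ℝ) := sum_le_sum fun i _ => card_Icc_filter_dvd_le N (d i)
    _ = N * ∑ i ∈ T, (d i : ℝ)⁻¹ := by simp only [mul_sum, div_eq_mul_inv]

/-- The integers with a square divisor `r ^ 2` such that `r ^ 3 > c`. The exponent `3` makes the
complement consist of integers whose proper prime powers are all at most `c`. -/
def squareExceptions (c : ℝ) : Set ℕ := {n | ∃ r : ℕ, c < (r : ℝ) ^ 3 ∧ r ^ 2 ∣ n}

/-- The integers divisible by `p * q` for primes `p > c` and `q ≡ 1 (mod p)`: for these the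
exponent `k = 1` violates `c`-separability. -/
def primePairExceptions (c : ℝ) : Set ℕ :=
  {n | ∃ p q : ℕ, p.Prime ∧ q.Prime ∧ c < p ∧ q ≡ 1 [MOD p] ∧ p * q ∣ n}

theorem antitone_squareExceptions : Antitone squareExceptions :=
  fun _ _ hcd _ ⟨r, hr, hdvd⟩ => ⟨r, hcd.trans_lt hr, hdvd⟩

theorem antitone_primePairExceptions : Antitone primePairExceptions :=
  fun _ _ hcd _ ⟨p, q, hp, hq, hlt, h⟩ => ⟨p, q, hp, hq, hcd.trans_lt hlt, h⟩

theorem lt_of_modEq_one {m p : ℕ} (hm : 1 < m) (h : m ≡ 1 [MOD p]) : p < m := by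
  by_contra! hle
  have hdvd := (Nat.modEq_iff_dvd' hm.le).1 h.symm
  have := Nat.le_of_dvd (by omega) hdvd
  omega

open scoped Classical in
theorem card_squareExceptions_le {c : ℝ} (hc : 1 ≤ c) (N : ℕ) :
    (#{n ∈ Icc 1 N | n ∈ squareExceptions c} : ℝ) ≤ N * (⌊c ^ (3⁻¹ : ℝ)⌋₊ : ℝ)⁻¹ := by
  set R := ⌊c ^ (3⁻¹ : ℝ)⌋₊
  have hR : R ≠ 0 := (Nat.floor_pos.2 (Real.one_le_rpow hc (by norm_num))).ne'
  have hcube : (c ^ (3⁻¹ : ℝ)) ^ 3 = c := by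
    exact_mod_cast Real.rpow_inv_natCast_pow (by linarith) three_ne_zero
  have hunion := card_le_mul_sum_inv_of_exists_dvd (N := N)
    (B := {n ∈ Icc 1 N | n ∈ squareExceptions c}) (T := Ioc R (max R N))
    (d := (· ^ 2)) fun n hn => by
      obtain ⟨hnN, r, hr, hdvd⟩ := mem_filter.1 hn
      refine ⟨hnN, r, mem_Ioc.2 ⟨?_, le_max_of_le_right ?_⟩, hdvd⟩
      · refine (Nat.floor_lt (by positivity)).2 (lt_of_pow_lt_pow_left₀ 3 r.cast_nonneg ?_)
        rwa [hcube]
      · exact (Nat.le_self_pow two_ne_zero r).trans <|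
          (Nat.le_of_dvd (mem_Icc.1 hnN).1 hdvd).trans (mem_Icc.1 hnN).2
  have htail := sum_Ioc_inv_sq_le_sub (α := ℝ) hR (le_max_left R N)
  refine hunion.trans ?_
  gcongr
  push_cast at htail ⊢
  have : 0 ≤ (max (R : ℝ) N)⁻¹ := by positivity
  linarith

theorem sum_inv_prime_pairs_le {M N : ℕ} (hM : 2 ≤ M) (hN : 3 ≤ N) :
    ∑ p ∈ Ioc M N with p.Prime,
        (p : ℝ)⁻¹ * ∑ q ∈ Ioc p N with q.Prime ∧ q ≡ 1 [MOD p], (q : ℝ)⁻¹ ≤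
      280 * Real.log 4 * (Real.log (Real.log N) + 2) / (M * Real.log M) := by
  have hL := harmonic_log_two_add_one_le hN
  set L := Real.log (Real.log N) + 2
  replace hL : 0 ≤ L := le_trans (mod_cast (harmonic_pos (Nat.succ_ne_zero _)).le) hL
  have hterm : ∀ p ∈ {p ∈ Ioc M N | p.Prime},
      (p : ℝ)⁻¹ * ∑ q ∈ Ioc p N with q.Prime ∧ q ≡ 1 [MOD p], (q : ℝ)⁻¹ ≤
        70 * L * ((p : ℝ) ^ 2)⁻¹ := by
    intro p hp
    have hp : p.Prime := (mem_filter.1 hp).2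
    have hp2 : (2 : ℝ) ≤ p := mod_cast hp.two_le
    have hφ : (p : ℝ) / 2 ≤ p.totient := by
      rw [Nat.totient_prime hp, Nat.cast_pred hp.pos]
      linarith
    calc (p : ℝ)⁻¹ * ∑ q ∈ Ioc p N with q.Prime ∧ q ≡ 1 [MOD p], (q : ℝ)⁻¹
        ≤ (p : ℝ)⁻¹ * (35 * L / p.totient) := by
          gcongr
          exact sum_inv_primes_modEq_le hp.pos hN 1
      _ ≤ (p : ℝ)⁻¹ * (35 * L / (p / 2)) := by gcongr
      _ = 70 * L * ((p : ℝ) ^ 2)⁻¹ := by field_simp; ring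
  calc _ ≤ ∑ p ∈ Ioc M N with p.Prime, 70 * L * ((p : ℝ) ^ 2)⁻¹ := sum_le_sum hterm
    _ ≤ 70 * L * (4 * Real.log 4 / (M * Real.log M)) := by
        rw [← mul_sum]
        gcongr
        exact sum_inv_sq_primes_le hM N
    _ = 280 * Real.log 4 * L / (M * Real.log M) := by ring

open scoped Classical in
theorem card_primePairExceptions_le {c : ℝ} (hc : 0 ≤ c) (N : ℕ) :
    (#{n ∈ Icc 1 N | n ∈ primePairExceptions c} : ℝ) ≤
      N * ∑ p ∈ Ioc ⌊c⌋₊ N with p.Prime,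
        (p : ℝ)⁻¹ * ∑ q ∈ Ioc p N with q.Prime ∧ q ≡ 1 [MOD p], (q : ℝ)⁻¹ := by
  set T : Finset (Σ _ : ℕ, ℕ) := {p ∈ Ioc ⌊c⌋₊ N | p.Prime}.sigma
    fun p => {q ∈ Ioc p N | q.Prime ∧ q ≡ 1 [MOD p]}
  have hunion := card_le_mul_sum_inv_of_exists_dvd (N := N)
    (B := {n ∈ Icc 1 N | n ∈ primePairExceptions c}) (T := T)
    (d := fun x => x.1 * x.2) fun n hn => by
      obtain ⟨hnN, p, q, hp, hq, hcp, hqp, hdvd⟩ := mem_filter.1 hn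
      have hle : ∀ d, d ∣ n → d ≤ N := fun d hd =>
        (Nat.le_of_dvd (mem_Icc.1 hnN).1 hd).trans (mem_Icc.1 hnN).2
      have hpN := hle p ((dvd_mul_right p q).trans hdvd)
      have hqN := hle q ((dvd_mul_left q p).trans hdvd)
      have hpq := lt_of_modEq_one hq.one_lt hqp
      refine ⟨hnN, ⟨p, q⟩, mem_sigma.2 ⟨?_, ?_⟩, hdvd⟩
      · exact mem_filter.2 ⟨mem_Ioc.2 ⟨(Nat.floor_lt hc).2 hcp, hpN⟩, hp⟩
      · exact mem_filter.2 ⟨mem_Ioc.2 ⟨hpq, hqN⟩, hq, hqp⟩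
  simpa only [T, sum_sigma, Nat.cast_mul, mul_inv, ← mul_sum] using hunion

theorem hasDensityOne_notMem_squareExceptions :
    HasDensityOne {n : ℕ | n ∉ squareExceptions (Real.log (Real.log n))} := by
  classical
  refine hasDensityOne_setOf_notMem_log_log antitone_squareExceptions ?_
  have hc := tendsto_log_log_natCast_atTop.atTop_div_const two_pos
  have hR := tendsto_nat_floor_atTop.comp
    ((tendsto_rpow_atTop (by norm_num : (0 : ℝ) < 3⁻¹)).comp hc)
  refine squeeze_zero' (.of_forall fun N => by positivity) ?_
    (tendsto_inv_atTop_zero.comp (tendsto_natCast_atTop_atTop.comp hR))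
  filter_upwards [hc.eventually_ge_atTop 1] with N hcN
  refine div_le_of_le_mul₀ N.cast_nonneg (inv_nonneg.2 (Nat.cast_nonneg _)) ?_
  rw [mul_comm]
  exact card_squareExceptions_le hcN N

theorem hasDensityOne_notMem_primePairExceptions :
    HasDensityOne {n : ℕ | n ∉ primePairExceptions (Real.log (Real.log n))} := by
  classical
  refine hasDensityOne_setOf_notMem_log_log antitone_primePairExceptions ?_
  have hc := tendsto_log_log_natCast_atTop.atTop_div_const two_pos
  have hlogM := Real.tendsto_log_atTop.comp
    (tendsto_natCast_atTop_atTop.comp (tendsto_nat_floor_atTop.comp hc))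
  refine squeeze_zero' (.of_forall fun N => by positivity) ?_
    (hlogM.const_div_atTop (280 * Real.log 4 * 4))
  filter_upwards [hc.eventually_ge_atTop 2, eventually_ge_atTop 3] with N hcN hN
  set L := Real.log (Real.log N)
  set M := ⌊L / 2⌋₊
  have hM : 2 ≤ M := Nat.le_floor hcN
  have hM2 : (2 : ℝ) ≤ M := mod_cast hM
  have hlogM : 0 < Real.log M := Real.log_pos (by linarith)
  have hLM : L + 2 ≤ 4 * M := by linarith [Nat.lt_floor_add_one (L / 2)]
  refine div_le_of_le_mul₀ N.cast_nonneg (by positivity) ?_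
  calc (#{n ∈ Icc 1 N | n ∈ primePairExceptions (L / 2)} : ℝ)
      ≤ N * (280 * Real.log 4 * (L + 2) / (M * Real.log M)) := by
        refine (card_primePairExceptions_le (by linarith) N).trans ?_
        gcongr
        exact sum_inv_prime_pairs_le hM hN
    _ ≤ N * (280 * Real.log 4 * (4 * M) / (M * Real.log M)) := by gcongr
    _ = 280 * Real.log 4 * 4 / Real.log M * N := by field_simp

end Exceptions

section Arithmetic

variable {c : ℝ} {n : ℕ}

/-- Apply the hypothesis to `r = q ^ (k / 2)`, for which `r ^ 2 ∣ q ^ k ∣ r ^ 3`. -/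
theorem pow_le_of_notMem_squareExceptions (hn : n ∉ squareExceptions c) {q k : ℕ} (hq : 0 < q)
    (hk : 2 ≤ k) (hdvd : q ^ k ∣ n) : (q : ℝ) ^ k ≤ c := by
  have hcube : ((q ^ (k / 2) : ℕ) : ℝ) ^ 3 ≤ c := by
    refine le_of_not_gt fun hlt => hn ⟨q ^ (k / 2), hlt, dvd_trans ?_ hdvd⟩
    rw [← pow_mul]
    exact pow_dvd_pow q (by omega)
  refine le_trans ?_ hcube
  rw [Nat.cast_pow, ← pow_mul]
  exact pow_le_pow_right₀ (mod_cast hq) (by omega)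

theorem twoCFree_of_notMem_squareExceptions (hn : n ∉ squareExceptions c) : TwoCFree c n :=
  fun p hp hdvd => le_trans (mod_cast Nat.le_self_pow two_ne_zero p)
    (pow_le_of_notMem_squareExceptions hn hp.pos le_rfl hdvd)

theorem pseudoSquareFree_of_notMem_squareExceptions
    (hn : n ∉ squareExceptions (Real.log (Real.log n))) : PseudoSquareFree n := by
  have hlog : Real.log (Real.log n) ≤ Real.log n := Real.log_le_self (Real.log_natCast_nonneg n)
  refine fun p hp _ => ⟨fun hlt hdvd => ?_, fun hle => le_trans ?_ hlog⟩
  · exact (twoCFree_of_notMem_squareExceptions hn p hp hdvd).not_gt hlt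
  · rcases le_or_gt 2 (n.factorization p) with hv | hv
    · exact pow_le_of_notMem_squareExceptions hn hp.pos hv (n.ordProj_dvd p)
    · refine le_trans ?_ hle
      exact (pow_le_pow_right₀ (mod_cast hp.one_le) (Nat.le_of_lt_succ hv)).trans_eq (pow_one _)

theorem cSeparable_of_notMem_exceptions (hsq : n ∉ squareExceptions c)
    (hpair : n ∉ primePairExceptions c) : CSeparable c n := by
  intro p hp hcp hpn q hq k hdvd hmod
  by_contra hk
  have hlt : p < q ^ k := lt_of_modEq_one (Nat.one_lt_pow hk hq.one_lt) hmod
  rcases le_or_gt 2 k with hk2 | hk2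
  · have hle := pow_le_of_notMem_squareExceptions hsq hq.pos hk2 hdvd
    exact (hcp.trans (mod_cast hlt)).not_ge hle
  · obtain rfl : k = 1 := by omega
    rw [pow_one] at hdvd hmod hlt
    have hcop : p.Coprime q := (Nat.coprime_primes hp hq).2 hlt.ne
    exact hpair ⟨p, q, hp, hq, hcp, hmod, hcop.mul_dvd_of_dvd_of_dvd hpn hdvd⟩

end Arithmetic

/-- The set `D̂` of positive integers that are simultaneously pseudo-square-free,
`(2, log log n)`-free and `(log log n)`-separable has natural density `1`;
and in general the intersection of two sets of natural density `1` has natural density `1`. -/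
theorem intersection_density_one :
    HasDensityOne {n : ℕ | PseudoSquareFree n ∧
      TwoCFree (Real.log (Real.log n)) n ∧ CSeparable (Real.log (Real.log n)) n} ∧
    ∀ D₁ D₂ : Set ℕ, HasDensityOne D₁ → HasDensityOne D₂ → HasDensityOne (D₁ ∩ D₂) := by
  refine ⟨?_, fun _ _ => HasDensityOne.inter⟩
  refine (hasDensityOne_notMem_squareExceptions.inter
    hasDensityOne_notMem_primePairExceptions).mono fun n ⟨hsq, hpair⟩ => ⟨?_, ?_, ?_⟩
  · exact pseudoSquareFree_of_notMem_squareExceptions hsq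
  · exact twoCFree_of_notMem_squareExceptions hsq
  · exact cSeparable_of_notMem_exceptions hsq hpair
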